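/- arXiv:0908.4293 — 2 statements merged into one kernel-verified Lean document; each statement's English description precedes it below -/
import Mathlib

section
/- Let G be a continuous self-map of a compact metric space Q and let (X_n)_{n≥1} be a sequence of periodic orbits of G with strictly increasing periods π(X_n); let μ_n be the uniform atomic probability measure on X_n. Fix ε > 0, a continuous function φ : Q → ℝ with |φ(x)| < M for all x ∈ Q, a natural number N, and subsets X̃_{m,ε} ⊆ X_m such that for all m > N: (1) #X̃_{m,ε}/#X_m > 1 − ε; and (2) for every n with N ≤ n < m and every x ∈ X̃_{m,ε}, |∫ φ dν_{π(X_n)}(x) − ∫ φ dμ_n| < ε. Then for all m > n > N one has |∫ φ dμ_m − ∫ φ dμ_n| ≤ (1 + 2M)ε. -/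
open MeasureTheory Filter Metric Topology
open scoped ENNReal

/-- The uniform atomic probability measure on a finite set `X`:
`μ_X = (1/#X) ∑_{x ∈ X} δ_x`. -/
noncomputable def unifOrbit {Q : Type*} [MeasurableSpace Q] (X : Finset Q) :
    Measure Q := ((X.card : ℝ≥0∞))⁻¹ • ∑ x ∈ X, Measure.dirac x

/-- The `k`-measure of a point `x`: `ν_k(x) = (1/k) ∑_{i=0}^{k-1} δ_{G^i(x)}`. -/
noncomputable def nuMeas {Q : Type*} [MeasurableSpace Q] (G : Q → Q) (k : ℕ) (x : Q) :
    Measure Q := ((k : ℝ≥0∞))⁻¹ • ∑ i ∈ Finset.range k, Measure.dirac (G^[i] x)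

/-- `X` is a periodic orbit of `G`: the orbit of a periodic point, with period `π(X) = #X`. -/
def IsPeriodicOrbit {Q : Type*} (G : Q → Q) (X : Finset Q) : Prop :=
  0 < X.card ∧ ∃ x : Q, G^[X.card] x = x ∧ (X : Set Q) = {y | ∃ i < X.card, G^[i] x = y}

lemma aux_unif {Q : Type*} [MetricSpace Q] [MeasurableSpace Q] [BorelSpace Q]
    (φ : Q → ℝ) (X : Finset Q) :
    ∫ y, φ y ∂(unifOrbit X) = (X.card : ℝ)⁻¹ * ∑ x ∈ X, φ x := by
  unfold unifOrbit
  rw [integral_smul_measure, integral_finset_sum_measure]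
  · simp
  · intro i _
    exact integrable_dirac (by simp)

lemma aux_nu {Q : Type*} [MetricSpace Q] [MeasurableSpace Q] [BorelSpace Q]
    (φ : Q → ℝ) (G : Q → Q) (k : ℕ) (x : Q) :
    ∫ y, φ y ∂(nuMeas G k x) = (k : ℝ)⁻¹ * ∑ i ∈ Finset.range k, φ (G^[i] x) := by
  unfold nuMeas
  rw [integral_smul_measure, integral_finset_sum_measure]
  · simp
  · intro i _
    exact integrable_dirac (by simp)

lemma aux_perm {Q : Type*} (G : Q → Q) (X : Finset Q) (h : IsPeriodicOrbit G X)
    (f : Q → ℝ) : ∑ x ∈ X, f (G x) = ∑ x ∈ X, f x := by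
  obtain ⟨hp, x0, hx0, hX⟩ := h
  have mem : ∀ y, y ∈ X ↔ ∃ i < X.card, G^[i] x0 = y := by
    intro y
    rw [← Finset.mem_coe, hX]; rfl
  have hmaps : Set.MapsTo G (X : Set Q) (X : Set Q) := by
    intro y hy
    obtain ⟨i, hi, rfl⟩ := (mem y).1 hy
    rw [Finset.mem_coe, mem, ← Function.iterate_succ_apply' G]
    by_cases h : i + 1 < X.card
    · exact ⟨i + 1, h, rfl⟩
    · refine ⟨0, hp, ?_⟩
      have : i.succ = X.card := by omega
      rw [this, hx0]; rfl
  have hsurj : Set.SurjOn G (X : Set Q) (X : Set Q) := by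
    intro y hy
    obtain ⟨i, hi, rfl⟩ := (mem y).1 hy
    rcases i with _ | i
    · refine ⟨G^[X.card - 1] x0, (mem _).2 ⟨_, by omega, rfl⟩, ?_⟩
      rw [← Function.iterate_succ_apply' G]
      have : (X.card - 1).succ = X.card := by omega
      rw [this, hx0]; rfl
    · exact ⟨G^[i] x0, (mem _).2 ⟨i, by omega, rfl⟩, by
        rw [← Function.iterate_succ_apply' G]⟩
  have hinj : Set.InjOn G (X : Set Q) :=
    Finset.injOn_of_surjOn_of_card_le G hmaps hsurj le_rfl
  exact Finset.sum_nbij G hmaps hinj hsurj (fun _ _ => rfl)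

lemma aux_iter {Q : Type*} (G : Q → Q) (X : Finset Q) (h : IsPeriodicOrbit G X)
    (f : Q → ℝ) (i : ℕ) : ∑ x ∈ X, f (G^[i] x) = ∑ x ∈ X, f x := by
  induction i with
  | zero => rfl
  | succ i ih =>
    rw [← ih]
    exact aux_perm G X h (fun x => f (G^[i] x))

/-- The key Cauchy estimate in the proof of Lemma 2.2: under the approximation
hypotheses for a fixed `ε`, a continuous `φ` bounded by `M`, and a threshold `N`,
one has `|∫ φ dμ_m − ∫ φ dμ_n| ≤ (1 + 2M)ε` for all `m > n > N`. -/
theorem stmt1 {Q : Type*} [MetricSpace Q] [CompactSpace Q]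
    [MeasurableSpace Q] [BorelSpace Q]
    (G : Q → Q) (hG : Continuous G)
    (X : ℕ → Finset Q) (hXper : ∀ n, IsPeriodicOrbit G (X n))
    (hXmono : StrictMono fun n => (X n).card)
    (ε : ℝ) (hε : 0 < ε) (φ : C(Q, ℝ)) (M : ℝ) (hM : ∀ x : Q, |φ x| < M)
    (N : ℕ) (Xt : ℕ → Finset Q) (hXt : ∀ m, Xt m ⊆ X m)
    (h1 : ∀ m, N < m → 1 - ε < ((Xt m).card : ℝ) / ((X m).card : ℝ))
    (h2 : ∀ m, N < m → ∀ n, N ≤ n → n < m → ∀ x ∈ Xt m,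
      |(∫ y, φ y ∂(nuMeas G (X n).card x)) - ∫ y, φ y ∂(unifOrbit (X n))| < ε) :
    ∀ m n, N < n → n < m →
      |(∫ y, φ y ∂(unifOrbit (X m))) - ∫ y, φ y ∂(unifOrbit (X n))| ≤ (1 + 2 * M) * ε := by
  classical
  intro m n hn hnm
  have hm : N < m := hn.trans hnm
  have hp : (0 : ℝ) < (X m).card := by exact_mod_cast (hXper m).1
  have hk : (0 : ℝ) < (X n).card := by exact_mod_cast (hXper n).1
  have hgood := h2 m hm n hn.le hnm
  have hfrac := h1 m hm
  have hbnd : ∀ Y : Finset Q, Y.Nonempty → |(Y.card : ℝ)⁻¹ * ∑ x ∈ Y, φ x| ≤ M := by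
    intro Y hY
    have hc : (0 : ℝ) < Y.card := by exact_mod_cast hY.card_pos
    rw [abs_mul, abs_of_pos (inv_pos.2 hc), inv_mul_le_iff₀ hc]
    calc |∑ x ∈ Y, φ x| ≤ ∑ x ∈ Y, |φ x| := Finset.abs_sum_le_sum_abs _ _
      _ ≤ ∑ x ∈ Y, M := Finset.sum_le_sum fun x _ => (hM x).le
      _ = Y.card * M := by simp
  have hI := hbnd (X n) (Finset.card_pos.1 (hXper n).1)
  rw [aux_unif, aux_unif]
  simp only [aux_unif, aux_nu] at hgood
  set I := ((X n).card : ℝ)⁻¹ * ∑ x ∈ X n, φ x with hIdef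
  set A : Q → ℝ := fun x =>
    ((X n).card : ℝ)⁻¹ * ∑ i ∈ Finset.range (X n).card, φ (G^[i] x) with hA
  have hAb : ∀ x, |A x| ≤ M := by
    intro x
    simp only [hA]
    rw [abs_mul, abs_of_pos (inv_pos.2 hk), inv_mul_le_iff₀ hk]
    calc _ ≤ ∑ i ∈ Finset.range (X n).card, |φ (G^[i] x)| := Finset.abs_sum_le_sum_abs _ _
      _ ≤ ∑ i ∈ Finset.range (X n).card, M := Finset.sum_le_sum fun i _ => (hM _).le
      _ = (X n).card * M := by simp
  have hAsum : ∑ x ∈ X m, A x = ∑ x ∈ X m, φ x := by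
    simp only [hA]
    rw [← Finset.mul_sum, Finset.sum_comm,
      Finset.sum_congr rfl (fun i _ => aux_iter G (X m) (hXper m) φ i)]
    simp only [Finset.sum_const, Finset.card_range, nsmul_eq_mul]
    field_simp
  have hM0 : 0 ≤ M := (abs_nonneg _).trans hI
  have key : |∑ x ∈ X m, (A x - I)| ≤ (X m).card * ((1 + 2 * M) * ε) := by
    refine (Finset.abs_sum_le_sum_abs _ _).trans ?_
    rw [← Finset.sum_sdiff (hXt m)]
    have e1 : ∑ x ∈ X m \ Xt m, |A x - I| ≤ ((X m).card - (Xt m).card : ℝ) * (2 * M) := by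
      calc _ ≤ ∑ x ∈ X m \ Xt m, (2 * M) := Finset.sum_le_sum fun x _ => by
            have := abs_sub (A x) I
            linarith [hAb x]
        _ = _ := by
            rw [Finset.sum_const, nsmul_eq_mul, Finset.card_sdiff_of_subset (hXt m),
              Nat.cast_sub (Finset.card_le_card (hXt m))]
    have e2 : ∑ x ∈ Xt m, |A x - I| ≤ (Xt m).card * ε := by
      calc _ ≤ ∑ x ∈ Xt m, ε := Finset.sum_le_sum fun x hx => (hgood x hx).le
        _ = _ := by simp
    have e3 : ((Xt m).card : ℝ) ≤ (X m).card := by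
      exact_mod_cast Finset.card_le_card (hXt m)
    rw [lt_div_iff₀ hp] at hfrac
    have e4 : ((X m).card - (Xt m).card : ℝ) * (2 * M) ≤ (ε * (X m).card) * (2 * M) :=
      mul_le_mul_of_nonneg_right (by linarith) (by linarith)
    have e5 := mul_le_mul_of_nonneg_right e3 hε.le
    linarith
  rw [Finset.sum_sub_distrib, hAsum, Finset.sum_const, nsmul_eq_mul] at key
  have : ((X m).card : ℝ)⁻¹ * ∑ x ∈ X m, φ x - I
      = ((X m).card : ℝ)⁻¹ * (∑ x ∈ X m, φ x - (X m).card * I) := by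
    field_simp
  rw [this, abs_mul, abs_of_pos (inv_pos.2 hp), inv_mul_le_iff₀ hp]
  exact key
end

section
/- Let G be a continuous self-map of a compact metric space Q and let (X_n)_{n≥1} be a sequence of periodic orbits of G with strictly increasing periods π(X_n); let μ_n be the uniform atomic probability measure on X_n. Assume there are sequences of numbers (γ_n)_{n≥1} with γ_n > 0 and (κ_n)_{n≥1} with κ_n ∈ (0,1] such that: (1) for each n, the orbit X_{n+1} is a (γ_n, κ_n)-good approximation of X_n; (2) Σ_{n=1}^∞ γ_n < ∞; (3) ∏_{n=1}^∞ κ_n > 0. Then the sequence (μ_n) converges in the weak-* topology to a measure μ; the limit measure μ is ergodic and G-invariant; and supp μ = ⋂_{k=1}^∞ closure(⋃_{l=k}^∞ X_l), i.e. supp μ is the topological limit of the sequence of orbits X_n: it equals the set of points y ∈ Q for which there exist m_i → ∞ and x_i ∈ X_{m_i} with x_i → y. -/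
open MeasureTheory Filter Metric Topology
open scoped ENNReal

/-- `Y` is a `(γ, κ)`-good approximation of `X` (both periodic orbits of `G`):
there are `Γ ⊆ Y` and a projection `ρ : Γ → X` with
(i) `dist(G^j y, G^j ρ(y)) < γ` for all `y ∈ Γ` and `0 ≤ j < π(X)`,
(ii) `#Γ/#Y ≥ κ`, (iii) all fibers `ρ⁻¹(x)`, `x ∈ X`, have the same cardinality. -/
def GoodApprox {Q : Type*} [MetricSpace Q] (G : Q → Q) (γ κ : ℝ) (Y X : Finset Q) : Prop :=
  ∃ (Γ : Finset Q) (ρ : Q → Q),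
    Γ ⊆ Y ∧ (∀ y ∈ Γ, ρ y ∈ X) ∧
    (∀ y ∈ Γ, ∀ j < X.card, dist (G^[j] y) (G^[j] (ρ y)) < γ) ∧
    κ ≤ (Γ.card : ℝ) / (Y.card : ℝ) ∧
    ∃ c : ℕ, ∀ x ∈ X, Set.ncard {y : Q | y ∈ Γ ∧ ρ y = x} = c

/-- The support of a Borel measure: the set of points all of whose open
neighborhoods have positive measure. -/
def msupport {Q : Type*} [TopologicalSpace Q] [MeasurableSpace Q] (μ : Measure Q) : Set Q :=
  {x | ∀ U : Set Q, IsOpen U → x ∈ U → 0 < μ U}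


noncomputable def av {Q : Type*} (X : Finset Q) (f : Q → ℝ) : ℝ := (X.card : ℝ)⁻¹ * ∑ x ∈ X, f x

lemma integral_unif {Q : Type*} [MeasurableSpace Q] [MeasurableSingletonClass Q]
    (X : Finset Q) (f : Q → ℝ) : ∫ y, f y ∂(unifOrbit X) = av X f := by
  unfold unifOrbit av
  rw [integral_smul_measure, integral_finsetSum_measure]
  · simp
  · intro i _
    exact integrable_dirac (by simp)

lemma unif_prob {Q : Type*} [MeasurableSpace Q] 
    (X : Finset Q) (h : 0 < X.card) : IsProbabilityMeasure (unifOrbit X) := by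
  constructor
  unfold unifOrbit
  simp
  rw [ENNReal.inv_mul_cancel]
  · exact_mod_cast h.ne'
  · simp

def GA {Q : Type*} [MetricSpace Q] (G : Q → Q) (γ κ : ℝ) (Y X : Finset Q) : Prop :=
  ∃ (Γ : Finset Q) (ρ : Q → Q) (c : ℕ),
    Γ ⊆ Y ∧ (∀ y ∈ Γ, ρ y ∈ X) ∧
    (∀ y ∈ Γ, ∀ j < X.card, dist (G^[j] y) (G^[j] (ρ y)) < γ) ∧
    κ ≤ (Γ.card : ℝ) / (Y.card : ℝ) ∧ Γ.card = X.card * c ∧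
    (open Classical in ∀ x ∈ X, (Γ.filter (fun y => ρ y = x)).card = c)

open Classical in
lemma ga_of {Q : Type*} [MetricSpace Q] {G : Q → Q} {γ κ : ℝ} {Y X : Finset Q}
    (h : GoodApprox G γ κ Y X) : GA G γ κ Y X := by
  obtain ⟨Γ, ρ, h1, h2, h3, h4, c, h5⟩ := h
  have h6 : ∀ x ∈ X, (Γ.filter (fun y => ρ y = x)).card = c := by
    intro x hx
    rw [← h5 x hx, ← Set.ncard_coe_finset]
    congr 1
    ext y; simp
  refine ⟨Γ, ρ, c, h1, h2, h3, h4, ?_, h6⟩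
  rw [Finset.card_eq_sum_card_fiberwise (f := ρ) (t := X) (fun y hy => h2 y hy),
    Finset.sum_congr rfl h6]
  simp

open Classical in
lemma ga_refl {Q : Type*} [MetricSpace Q] {G : Q → Q} {γ κ : ℝ} {X : Finset Q} (hX : 0 < X.card)
    (hγ : 0 < γ) (hκ : κ ≤ 1) : GA G γ κ X X := by
  refine ⟨X, id, 1, subset_rfl, fun y hy => hy, ?_, ?_, by simp, ?_⟩
  · intro y _ j _; simpa using hγ
  · rw [div_self]; exact hκ
    exact_mod_cast hX.ne'
  · intro x hx
    rw [Finset.card_eq_one]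
    refine ⟨x, ?_⟩
    ext y; simp; grind

open Classical in
lemma ga_trans {Q : Type*} [MetricSpace Q] {G : Q → Q} {γ κ γ' κ' : ℝ} {Z Y X : Finset Q}
    (hY : 0 < Y.card) (hXY : X.card ≤ Y.card) (hκ : 0 ≤ κ) (hκ' : 0 ≤ κ')
    (h : GA G γ κ Y X) (h' : GA G γ' κ' Z Y) : GA G (γ + γ') (κ * κ') Z X := by
  obtain ⟨Γ, ρ, c, h1, h2, h3, h4, h5, h6⟩ := h
  obtain ⟨Γ', ρ', c', h1', h2', h3', h4', h5', h6'⟩ := h'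
  have hf : ∀ x ∈ X, ((Γ'.filter (fun y => ρ' y ∈ Γ)).filter (fun y => ρ (ρ' y) = x)).card
      = c * c' := by
    intro x hx
    rw [Finset.card_eq_sum_card_fiberwise (f := ρ') (t := Γ.filter (fun y => ρ y = x))]
    · rw [← h6 x hx, ← smul_eq_mul, ← Finset.sum_const]
      refine Finset.sum_congr rfl fun b hb => ?_
      simp only [Finset.mem_filter] at hb
      rw [← h6' b (h1 hb.1)]
      congr 1
      ext y; simp only [Finset.mem_filter]; grind
    · intro y hy
      simp at hy ⊢; tauto
  have hc : (Γ'.filter (fun y => ρ' y ∈ Γ)).card = X.card * (c * c') := by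
    rw [Finset.card_eq_sum_card_fiberwise (f := fun y => ρ (ρ' y)) (t := X),
      Finset.sum_congr rfl hf]
    · simp
    · intro y hy
      simp at hy
      exact h2 _ hy.2
  refine ⟨Γ'.filter (fun y => ρ' y ∈ Γ), fun y => ρ (ρ' y), c * c', ?_, ?_, ?_, ?_, hc, hf⟩
  · exact (Finset.filter_subset _ _).trans h1'
  · intro y hy; simp at hy; exact h2 _ hy.2
  · intro y hy j hj
    simp at hy
    have a := h3 _ hy.2 j hj
    have b := h3' _ hy.1 j (hj.trans_le hXY)
    have := dist_triangle (G^[j] y) (G^[j] (ρ' y)) (G^[j] (ρ (ρ' y)))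
    linarith
  · calc κ * κ' ≤ _ := mul_le_mul h4 h4' hκ' (hκ.trans h4)
      _ = _ := by
        rw [hc, h5, h5']
        have : (Y.card : ℝ) ≠ 0 := by exact_mod_cast hY.ne'
        push_cast
        field_simp

lemma ga_mono {Q : Type*} [MetricSpace Q] {G : Q → Q} {γ κ γ' κ' : ℝ} {Y X : Finset Q}
    (h : GA G γ κ Y X) (hg : γ ≤ γ') (hk : κ' ≤ κ) : GA G γ' κ' Y X := by
  obtain ⟨Γ, ρ, c, h1, h2, h3, h4, h5, h6⟩ := h
  exact ⟨Γ, ρ, c, h1, h2, fun y hy j hj => (h3 y hy j hj).trans_le hg, hk.trans h4, h5, h6⟩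

lemma ga_chain {Q : Type*} [MetricSpace Q] 
    (G : Q → Q) (X : ℕ → Finset Q) (hXper : ∀ n, 0 < (X n).card)
    (hXmono : StrictMono fun n => (X n).card)
    (γ : ℕ → ℝ) (hγ : ∀ n, 0 < γ n)
    (κ : ℕ → ℝ) (hκ : ∀ n, κ n ∈ Set.Ioc (0 : ℝ) 1)
    (h1 : ∀ n, GoodApprox G (γ n) (κ n) (X (n + 1)) (X n))
    (h2 : Summable γ)
    (h3 : ∃ P : ℝ, 0 < P ∧
      Tendsto (fun n => ∏ k ∈ Finset.range n, κ k) atTop (𝓝 P)) (ε : ℝ) (hε : 0 < ε) :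
    ∃ N, ∀ n ≥ N, ∀ m ≥ n, GA G ε (1 - ε) (X m) (X n) := by
  obtain ⟨P, hP, hlim⟩ := h3
  set p : ℕ → ℝ := fun n => ∏ k ∈ Finset.range n, κ k with hp
  set s : ℕ → ℝ := fun n => ∑ k ∈ Finset.range n, γ k with hs
  have hppos : ∀ n, 0 < p n := fun n => Finset.prod_pos fun k _ => (hκ k).1
  have hslim : Tendsto s atTop (𝓝 (∑' k, γ k)) := h2.hasSum.tendsto_sum_nat
  have hanti : Antitone p := antitone_nat_of_succ_le fun n => by
    simp only [hp, Finset.prod_range_succ]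
    exact mul_le_of_le_one_right (hppos n).le (hκ n).2
  have hPle : ∀ n, P ≤ p n := fun n => hanti.le_of_tendsto hlim n
  have key : ∀ n d, GA G (s (n + d) - s n + ε / 2) (p (n + d) / p n) (X (n + d)) (X n) := by
    intro n d
    induction d with
    | zero => 
      apply ga_refl (hXper n)
      · simp; exact hε
      · simp [(hppos n).ne']
    | succ d ih =>
      have := ga_trans (hXper _) (hXmono.monotone (Nat.le_add_right n d))
        (div_pos (hppos _) (hppos _)).le (hκ (n + d)).1.le ih (ga_of (h1 (n + d)))
      refine ga_mono this ?_ ?_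
      · simp only [hs]; rw [← add_assoc n d 1, Finset.sum_range_succ]; linarith
      · simp only [hp]; rw [← add_assoc n d 1, Finset.prod_range_succ]; apply le_of_eq; ring
  have e1 : ∀ᶠ n in atTop, (∑' k, γ k) - ε / 2 < s n := hslim.eventually_const_lt (by linarith)
  have e2 : ∀ᶠ n in atTop, 1 - ε < P / p n := by
    have : Tendsto (fun n => P / p n) atTop (𝓝 (P / P)) := tendsto_const_nhds.div hlim hP.ne'
    rw [div_self hP.ne'] at this
    exact this.eventually_const_lt (by linarith)
  obtain ⟨N, hN⟩ := eventually_atTop.1 (e1.and e2)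
  refine ⟨N, fun n hn m hm => ?_⟩
  obtain ⟨d, rfl⟩ := Nat.exists_eq_add_of_le hm
  refine ga_mono (key n d) ?_ ?_
  · have : s (n + d) ≤ ∑' k, γ k := h2.sum_le_tsum _ (fun k _ => (hγ k).le)
    linarith [(hN n hn).1]
  · refine (hN n hn).2.le.trans ?_
    gcongr
    · exact (hppos n).le
    · exact hPle _

noncomputable def bk {Q : Type*} (G : Q → Q) (N : ℕ) (f : Q → ℝ) (y : Q) : ℝ :=
  (N : ℝ)⁻¹ * ∑ j ∈ Finset.range N, f (G^[j] y)

lemma sum_shift {Q : Type*} (G : Q → Q) (N : ℕ) (f : Q → ℝ) (y : Q) (h : G^[N] y = y) :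
    ∑ j ∈ Finset.range N, f (G^[j] (G y)) = ∑ j ∈ Finset.range N, f (G^[j] y) := by
  have a := Finset.sum_range_succ (fun j => f (G^[j] y)) N
  rw [Finset.sum_range_succ'] at a
  simp only [h, Function.iterate_zero, id] at a
  simpa using a

open Classical in
lemma orbit_sum {Q : Type*} {G : Q → Q} {X : Finset Q} (h : IsPeriodicOrbit G X) (f : Q → ℝ) :
    ∀ x ∈ X, bk G X.card f x = av X f := by
  obtain ⟨h0, x0, hx, hX⟩ := h
  have hX' : X = (Finset.range X.card).image (fun i => G^[i] x0) := by
    apply Finset.coe_injective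
    rw [hX]; ext y; simp
  have hinj : Set.InjOn (fun i => G^[i] x0) (Finset.range X.card) := by
    apply Finset.injOn_of_card_image_eq
    rw [← hX']; simp
  have e : ∑ x ∈ X, f x = ∑ j ∈ Finset.range X.card, f (G^[j] x0) := by
    conv_lhs => rw [hX']
    exact Finset.sum_image hinj
  intro x hxX
  unfold bk av
  rw [e]
  congr 1
  have : ∀ i, ∑ j ∈ Finset.range X.card, f (G^[j] (G^[i] x0)) =
      ∑ j ∈ Finset.range X.card, f (G^[j] x0) := by
    intro i
    induction i with
    | zero => rfl
    | succ i ih =>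
      rw [← ih, Function.iterate_succ_apply', sum_shift]
      rw [← Function.iterate_add_apply, add_comm, Function.iterate_add_apply, hx]
  have hx2 : x ∈ (X : Set Q) := hxX
  rw [hX] at hx2
  obtain ⟨i, _, rfl⟩ := hx2
  exact this i

lemma av_inv {Q : Type*} {G : Q → Q} {X : Finset Q} (h : IsPeriodicOrbit G X) (f : Q → ℝ) :
    av X (fun x => f (G x)) = av X f := by
  have h' := h
  obtain ⟨h0, x0, hx, hX⟩ := h'
  have : x0 ∈ (X : Set Q) := by rw [hX]; exact ⟨0, h0, rfl⟩
  rw [← orbit_sum h f x0 this, ← orbit_sum h _ x0 this]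
  unfold bk
  rw [← sum_shift G X.card f x0 hx]
  simp only [← Function.iterate_succ_apply' G, Function.iterate_succ_apply]

lemma av_iter {Q : Type*} {G : Q → Q} {X : Finset Q} (h : IsPeriodicOrbit G X) (f : Q → ℝ) (j : ℕ) :
    av X (fun x => f (G^[j] x)) = av X f := by
  induction j generalizing f with
  | zero => rfl
  | succ j ih =>
    simp only [Function.iterate_succ_apply']
    rw [ih (fun x => f (G x)), av_inv h]

lemma av_bk {Q : Type*} {G : Q → Q} {X : Finset Q} (h : IsPeriodicOrbit G X) (f : Q → ℝ) (N : ℕ)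
    (hN : 0 < N) : av X (bk G N f) = av X f := by
  have : av X (bk G N f) = (N : ℝ)⁻¹ * ∑ j ∈ Finset.range N, av X (fun x => f (G^[j] x)) := by
    unfold av bk
    rw [← Finset.mul_sum, ← Finset.mul_sum, Finset.sum_comm]; ring
  rw [this]
  simp only [av_iter h]
  have : (N : ℝ) ≠ 0 := by exact_mod_cast hN.ne'
  simp; field_simp

lemma bk_cont {Q : Type*} [TopologicalSpace Q] {G : Q → Q} (hG : Continuous G) (N : ℕ) (f : C(Q, ℝ)) :
    Continuous (bk G N f) := by
  unfold bk
  refine continuous_const.mul (continuous_finsetSum _ fun j _ => f.continuous.comp (hG.iterate j))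

lemma key_est {Q : Type*} [MetricSpace Q] {G : Q → Q} {Y X : Finset Q} {δ : ℝ}
    (hX : IsPeriodicOrbit G X) (hY : IsPeriodicOrbit G Y)
    (h : GA G δ (1 - δ) Y X) (f : Q → ℝ) (C ω : ℝ) (hω : 0 ≤ ω) (hC : ∀ x, |f x| ≤ C)
    (huc : ∀ x y, dist x y < δ → |f x - f y| ≤ ω) :
    av Y (fun y => |bk G X.card f y - av X f|) ≤ ω + 2 * C * δ := by
  classical
  obtain ⟨Γ, ρ, c, h1, h2, h3, h4, h5, h6⟩ := h
  have hXp : (0 : ℝ) < X.card := by exact_mod_cast hX.1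
  have hYp : (0 : ℝ) < Y.card := by exact_mod_cast hY.1
  have hbk : ∀ y z, ∀ D, (∀ j < X.card, |f (G^[j] y) - f (G^[j] z)| ≤ D) →
      |bk G X.card f y - bk G X.card f z| ≤ D := by
    intro y z D hD
    unfold bk
    rw [← mul_sub, ← Finset.sum_sub_distrib, abs_mul, abs_inv, abs_of_pos hXp,
      inv_mul_le_iff₀ hXp]
    refine (Finset.abs_sum_le_sum_abs _ _).trans ?_
    refine (Finset.sum_le_sum fun j hj => hD j (Finset.mem_range.1 hj)).trans ?_
    simp
  have hg : ∀ y ∈ Γ, |bk G X.card f y - av X f| ≤ ω := by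
    intro y hy
    rw [← orbit_sum hX f _ (h2 y hy)]
    exact hbk _ _ _ fun j hj => huc _ _ (h3 y hy j hj)
  obtain ⟨z, hz⟩ := Finset.card_pos.1 hX.1
  have hb : ∀ y, |bk G X.card f y - av X f| ≤ 2 * C := by
    intro y
    rw [← orbit_sum hX f _ hz]
    refine hbk _ _ _ fun j hj => ?_
    have := hC (G^[j] y)
    have := hC (G^[j] z)
    have := abs_sub (f (G^[j] y)) (f (G^[j] z))
    linarith
  have hC0 : 0 ≤ C := (abs_nonneg _).trans (hC z)
  unfold av at *
  rw [inv_mul_le_iff₀ hYp, ← Finset.sum_sdiff h1]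
  have s1 := Finset.sum_le_sum (s := Γ) hg
  have s2 := Finset.sum_le_sum (s := Y \ Γ) (fun y _ => hb y)
  simp only [Finset.sum_const, nsmul_eq_mul] at s1 s2
  have hcard : ((Y \ Γ).card : ℝ) = Y.card - Γ.card := by
    rw [Finset.card_sdiff_of_subset h1, Nat.cast_sub (Finset.card_le_card h1)]
  have hle : (Γ.card : ℝ) ≤ Y.card := by exact_mod_cast Finset.card_le_card h1
  rw [hcard] at s2
  rw [le_div_iff₀ hYp] at h4
  have a1 : (Γ.card : ℝ) * ω ≤ Y.card * ω := by gcongr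
  have a2 : ((Y.card : ℝ) - Γ.card) * (2 * C) ≤ (Y.card * δ) * (2 * C) := by
    gcongr; linarith
  linarith

lemma l1_est {Q : Type*} [MetricSpace Q] [CompactSpace Q] {G : Q → Q}
    {X : ℕ → Finset Q} (hXper : ∀ n, IsPeriodicOrbit G (X n))
    (hga : ∀ ε > 0, ∃ N, ∀ n ≥ N, ∀ m ≥ n, GA G ε (1 - ε) (X m) (X n))
    (φ : C(Q, ℝ)) (ε : ℝ) (hε : 0 < ε) :
    ∃ N, ∀ n ≥ N, ∀ m ≥ n,
      av (X m) (fun y => |bk G (X n).card φ y - av (X n) φ|) ≤ ε := by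
  have huc := CompactSpace.uniformContinuous_of_continuous φ.continuous
  obtain ⟨δ, hδ, hd⟩ := Metric.uniformContinuous_iff.1 huc (ε / 2) (by linarith)
  set C := ‖φ‖ with hC
  have hC0 : 0 ≤ C := norm_nonneg _
  set δ' := min δ (ε / (4 * (C + 1))) with hδ'
  have hδ'0 : 0 < δ' := lt_min hδ (by positivity)
  obtain ⟨N, hN⟩ := hga δ' hδ'0
  refine ⟨N, fun n hn m hm => ?_⟩
  have := key_est (hXper n) (hXper m) (hN n hn m hm) φ C (ε / 2) (by linarith)
    (fun x => φ.norm_coe_le_norm x) (fun x y hxy => (hd (hxy.trans_le (min_le_left _ _))).le)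
  refine this.trans ?_
  have h1 : δ' ≤ ε / (4 * (C + 1)) := min_le_right _ _
  rw [le_div_iff₀ (by positivity)] at h1
  nlinarith

lemma av_mono {Q : Type*} {X : Finset Q} {f g : Q → ℝ} (h : ∀ x ∈ X, f x ≤ g x) :
    av X f ≤ av X g := by
  unfold av
  exact mul_le_mul_of_nonneg_left (Finset.sum_le_sum h) (by positivity)

lemma av_sub_const {Q : Type*} {X : Finset Q} (hX : 0 < X.card) (f : Q → ℝ) (c : ℝ) :
    av X (fun x => f x - c) = av X f - c := by
  have : (X.card : ℝ) ≠ 0 := by exact_mod_cast hX.ne'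
  unfold av
  simp
  field_simp

lemma abs_av {Q : Type*} {X : Finset Q} (f : Q → ℝ) : |av X f| ≤ av X (fun x => |f x|) := by
  unfold av
  rw [abs_mul, abs_of_nonneg (by positivity)]
  exact mul_le_mul_of_nonneg_left (Finset.abs_sum_le_sum_abs _ _) (by positivity)

lemma exists_lim {Q : Type*} [MetricSpace Q] [CompactSpace Q]
    [MeasurableSpace Q] [BorelSpace Q] {G : Q → Q} 
    {X : ℕ → Finset Q} (hXper : ∀ n, IsPeriodicOrbit G (X n))
    (hga : ∀ ε > 0, ∃ N, ∀ n ≥ N, ∀ m ≥ n, GA G ε (1 - ε) (X m) (X n)) :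
    ∃ μ : Measure Q, IsProbabilityMeasure μ ∧
      (∀ φ : C(Q, ℝ), Tendsto (fun n => av (X n) φ) atTop (𝓝 (∫ y, φ y ∂μ))) := by
  have hc : ∀ φ : C(Q, ℝ), CauchySeq (fun n => av (X n) φ) := by
    intro φ
    rw [Metric.cauchySeq_iff']
    intro ε hε
    obtain ⟨N, hN⟩ := l1_est hXper hga φ (ε / 2) (by linarith)
    refine ⟨N, fun m hm => ?_⟩
    have h := (abs_av _).trans (hN N le_rfl m hm)
    rw [av_sub_const (hXper m).1, av_bk (hXper m) _ _ (hXper N).1] at h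
    rw [Real.dist_eq]; linarith
  let ν : ℕ → ProbabilityMeasure Q := fun n => ⟨unifOrbit (X n), unif_prob _ (hXper n).1⟩
  obtain ⟨μ, hμ⟩ := exists_clusterPt_of_compactSpace (map ν atTop)
  refine ⟨μ, inferInstance, fun φ => ?_⟩
  apply le_nhds_of_cauchy_adhp (hc φ)
  have hcont : Continuous (fun p : ProbabilityMeasure Q => ∫ y, φ y ∂(p : Measure Q)) :=
    ProbabilityMeasure.continuous_integral_boundedContinuousFunction
      (BoundedContinuousFunction.mkOfCompact φ)
  have : MapClusterPt (∫ y, φ y ∂(μ : Measure Q)) atTop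
      ((fun p : ProbabilityMeasure Q => ∫ y, φ y ∂(p : Measure Q)) ∘ ν) :=
    MapClusterPt.continuousAt_comp hcont.continuousAt hμ
  have e : (fun n => av (X n) φ) =
      ((fun p : ProbabilityMeasure Q => ∫ y, φ y ∂(p : Measure Q)) ∘ ν) := by
    ext n
    exact (integral_unif (X n) φ).symm
  rw [← e] at this
  exact this

lemma lim_inv {Q : Type*} [MetricSpace Q] [CompactSpace Q]
    [MeasurableSpace Q] [BorelSpace Q] {G : Q → Q} (hG : Continuous G)
    {X : ℕ → Finset Q} (hXper : ∀ n, IsPeriodicOrbit G (X n))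
    (μ : Measure Q) [IsProbabilityMeasure μ]
    (hμ : ∀ φ : C(Q, ℝ), Tendsto (fun n => av (X n) φ) atTop (𝓝 (∫ y, φ y ∂μ))) :
    MeasurePreserving G μ μ := by
  refine ⟨hG.measurable, ?_⟩
  have : IsProbabilityMeasure (μ.map G) := Measure.isProbabilityMeasure_map hG.aemeasurable
  apply ext_of_forall_integral_eq_of_IsFiniteMeasure
  intro f
  rw [integral_map hG.aemeasurable f.continuous.aestronglyMeasurable]
  have a := hμ (f.toContinuousMap.comp ⟨G, hG⟩)
  have b := hμ f.toContinuousMap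
  refine tendsto_nhds_unique a (Tendsto.congr (fun n => ?_) b)
  exact (av_inv (hXper n) f).symm

lemma lim_erg {Q : Type*} [MetricSpace Q] [CompactSpace Q]
    [MeasurableSpace Q] [BorelSpace Q] {G : Q → Q} (hG : Continuous G)
    {X : ℕ → Finset Q} (hXper : ∀ n, IsPeriodicOrbit G (X n))
    (hga : ∀ ε > 0, ∃ N, ∀ n ≥ N, ∀ m ≥ n, GA G ε (1 - ε) (X m) (X n))
    (μ : Measure Q) [IsProbabilityMeasure μ]
    (hμ : ∀ φ : C(Q, ℝ), Tendsto (fun n => av (X n) φ) atTop (𝓝 (∫ y, φ y ∂μ))) :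
    Ergodic G μ := by
  have hmp := lim_inv hG hXper μ hμ
  refine ⟨hmp, ⟨fun E hE hinv => ?_⟩⟩
  have hint : ∀ (ν : Measure Q) [IsFiniteMeasure ν] (f : Q → ℝ), Continuous f → Integrable f ν := 
    fun ν _ f hf => hf.integrable_of_hasCompactSupport (HasCompactSupport.of_compactSpace f)
  have hmpE : MeasurePreserving G (μ.restrict E) (μ.restrict E) := by
    have := hmp.restrict_preimage hE
    rwa [hinv] at this
  have hiter : ∀ (φ : C(Q, ℝ)) (j : ℕ), ∫ y in E, φ (G^[j] y) ∂μ = ∫ y in E, φ y ∂μ := by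
    intro φ j
    have h := hmpE.iterate j
    have := integral_map h.measurable.aemeasurable (f := φ) (μ := μ.restrict E)
      φ.continuous.aestronglyMeasurable
    rw [h.map_eq] at this
    exact this.symm
  have hbk : ∀ (φ : C(Q, ℝ)) (N : ℕ), 0 < N → ∫ y in E, bk G N φ y ∂μ = ∫ y in E, φ y ∂μ := by
    intro φ N hN
    unfold bk
    rw [integral_const_mul, integral_finsetSum]
    · simp only [hiter]
      have : (N : ℝ) ≠ 0 := by exact_mod_cast hN.ne'
      simp; field_simp
    · intro j _
      exact hint _ _ (φ.continuous.comp (hG.iterate j))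
  have hmain : ∀ φ : C(Q, ℝ), ∫ y in E, φ y ∂μ = μ.real E * ∫ y, φ y ∂μ := by
    intro φ
    have h1 : Tendsto (fun n => μ.real E * av (X n) φ) atTop (𝓝 (μ.real E * ∫ y, φ y ∂μ)) :=
      (hμ φ).const_mul _
    refine tendsto_nhds_unique (f := fun n => μ.real E * av (X n) φ) (l := atTop) ?_ h1
    rw [Metric.tendsto_atTop]
    intro ε hε
    obtain ⟨N, hN⟩ := l1_est hXper hga φ (ε / 2) (by linarith)
    refine ⟨N, fun n hn => ?_⟩
    have hcb := bk_cont hG (X n).card φ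
    have hcc : Continuous (fun y => |bk G (X n).card φ y - av (X n) φ|) :=
      (hcb.sub continuous_const).abs
    have h2 : ∫ y, |bk G (X n).card φ y - av (X n) φ| ∂μ ≤ ε / 2 :=
      le_of_tendsto (hμ ⟨_, hcc⟩) (eventually_atTop.2 ⟨n, fun m hm => hN n hn m hm⟩)
    have h3 : ∫ y in E, |bk G (X n).card φ y - av (X n) φ| ∂μ ≤
        ∫ y, |bk G (X n).card φ y - av (X n) φ| ∂μ :=
      setIntegral_le_integral (hint _ _ hcc) (ae_of_all _ fun y => abs_nonneg _)
    have h4 : |∫ y in E, (bk G (X n).card φ y - av (X n) φ) ∂μ| ≤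
      ∫ y in E, |bk G (X n).card φ y - av (X n) φ| ∂μ := abs_integral_le_integral_abs
    rw [integral_sub (hint _ _ hcb) (integrable_const _), hbk φ _ (hXper n).1] at h4
    simp at h4
    rw [dist_comm, Real.dist_eq]
    linarith
  have hEq : μ.restrict E = (μ E) • μ := by
    have : IsFiniteMeasure ((μ E) • μ) := ⟨by simp⟩
    apply ext_of_forall_integral_eq_of_IsFiniteMeasure
    intro f
    rw [integral_smul_measure]
    exact hmain f.toContinuousMap
  have h5 : μ E = μ E * μ E := by
    have := congrArg (fun ν : Measure Q => ν E) hEq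
    simpa using this
  rw [eventuallyConst_set']
  by_cases h0 : μ E = 0
  · left; exact ae_eq_empty.2 h0
  · right
    have h6 : μ E = 1 := by
      have := (ENNReal.mul_right_inj h0 (measure_ne_top μ E)).1 (show μ E * μ E = μ E * 1 by
        rw [← h5, mul_one])
      exact this
    exact ae_eq_univ.2 ((prob_compl_eq_zero_iff hE).2 h6)

lemma supp_sub {Q : Type*} [MetricSpace Q] [CompactSpace Q]
    [MeasurableSpace Q] [BorelSpace Q] 
    {X : ℕ → Finset Q} (hX : ∀ n, 0 < (X n).card)
    (μ : Measure Q) [IsProbabilityMeasure μ]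
    (hμ : ∀ φ : C(Q, ℝ), Tendsto (fun n => av (X n) φ) atTop (𝓝 (∫ y, φ y ∂μ))) :
    msupport μ ⊆ ⋂ k : ℕ, closure (⋃ l : ℕ, ⋃ (_ : k ≤ l), (X l : Set Q)) := by
  intro y hy
  refine Set.mem_iInter.2 fun k => ?_
  set A := (⋃ l : ℕ, ⋃ (_ : k ≤ l), (X l : Set Q)) with hA
  by_contra hyn
  have hmem : ∀ l, k ≤ l → ∀ x ∈ X l, x ∈ A := fun l hl x hx => by
    simp only [hA, Set.mem_iUnion]; exact ⟨l, hl, hx⟩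
  have hne : A.Nonempty := by
    obtain ⟨z, hz⟩ := Finset.card_pos.1 (hX k)
    exact ⟨z, hmem k le_rfl z hz⟩
  have hpos := hy _ isClosed_closure.isOpen_compl hyn
  let φ : C(Q, ℝ) := ⟨fun z => infDist z A, continuous_infDist_pt A⟩
  have h0 : ∫ z, φ z ∂μ = 0 := by
    refine tendsto_nhds_unique (hμ φ) (tendsto_const_nhds.congr' ?_)
    filter_upwards [eventually_ge_atTop k] with n hn
    unfold av
    rw [Finset.sum_eq_zero, mul_zero]
    intro x hx
    exact infDist_zero_of_mem (hmem n hn x hx)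
  have hi : Integrable φ μ :=
    φ.continuous.integrable_of_hasCompactSupport (HasCompactSupport.of_compactSpace _)
  have h0 := (integral_eq_zero_iff_of_nonneg (f := φ) (fun z => infDist_nonneg) hi).1 h0
  refine hpos.ne' ?_
  refine measure_mono_null ?_ (ae_iff.1 h0)
  intro z hz hz0
  exact hz ((mem_closure_iff_infDist_zero hne).2 hz0)

lemma sub_lim {Q : Type*} [MetricSpace Q] (X : ℕ → Finset Q) :
    (⋂ k : ℕ, closure (⋃ l : ℕ, ⋃ (_ : k ≤ l), (X l : Set Q))) ⊆ 
      {y : Q | ∃ (m : ℕ → ℕ) (x : ℕ → Q), Tendsto m atTop atTop ∧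
        (∀ i, x i ∈ X (m i)) ∧ Tendsto x atTop (𝓝 y)} := by
  intro y hy
  have : ∀ i : ℕ, ∃ (m : ℕ) (x : Q), i ≤ m ∧ x ∈ X m ∧ dist x y < 1 / ((i : ℝ) + 1) := by
    intro i
    have := Set.mem_iInter.1 hy i
    obtain ⟨x, hx, hd⟩ := Metric.mem_closure_iff.1 this (1 / ((i : ℝ) + 1)) (by positivity)
    simp only [Set.mem_iUnion] at hx
    obtain ⟨m, hm, hx⟩ := hx
    exact ⟨m, x, hm, hx, by rwa [dist_comm]⟩
  choose m x h1 h2 h3 using this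
  refine ⟨m, x, tendsto_atTop_mono h1 tendsto_id, h2, ?_⟩
  rw [tendsto_iff_dist_tendsto_zero]
  exact squeeze_zero (fun _ => dist_nonneg) (fun i => (h3 i).le)
    tendsto_one_div_add_atTop_nhds_zero_nat

lemma lim_sub {Q : Type*} [MetricSpace Q] [CompactSpace Q]
    [MeasurableSpace Q] [BorelSpace Q] {G : Q → Q} 
    {X : ℕ → Finset Q} (hX : ∀ n, 0 < (X n).card)
    (hga : ∀ ε > 0, ∃ N, ∀ n ≥ N, ∀ m ≥ n, GA G ε (1 - ε) (X m) (X n))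
    (μ : Measure Q) [IsProbabilityMeasure μ]
    (hμ : ∀ φ : C(Q, ℝ), Tendsto (fun n => av (X n) φ) atTop (𝓝 (∫ y, φ y ∂μ))) :
    {y : Q | ∃ (m : ℕ → ℕ) (x : ℕ → Q), Tendsto m atTop atTop ∧
        (∀ i, x i ∈ X (m i)) ∧ Tendsto x atTop (𝓝 y)} ⊆ msupport μ := by
  classical
  rintro y ⟨m, x, hm, hx, hlim⟩ U hU hyU
  obtain ⟨r, hr, hrU⟩ := Metric.isOpen_iff.1 hU y hyU
  set ε := min (r / 3) (1 / 2) with hε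
  have hε0 : 0 < ε := lt_min (by linarith) (by norm_num)
  have hεr : 3 * ε ≤ r := by have : ε ≤ r / 3 := min_le_left _ _; linarith
  have hε1 : ε ≤ 1 / 2 := min_le_right _ _
  obtain ⟨N, hN⟩ := hga ε hε0
  obtain ⟨i, hi1, hi2⟩ := ((hm.eventually_ge_atTop N).and
    (Metric.tendsto_nhds.1 hlim ε hε0)).exists
  set n := m i
  let φ : C(Q, ℝ) := ⟨fun z => max 0 (3 * ε - dist z y), by fun_prop⟩
  have hφ0 : ∀ z, 0 ≤ φ z := fun z => le_max_left _ _
  have hXn : (0 : ℝ) < (X n).card := by exact_mod_cast hX n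
  have hlow : ∀ l ≥ n, ε * (1 / 2) / (X n).card ≤ av (X l) φ := by
    intro l hl
    obtain ⟨Γ, ρ, c, g1, g2, g3, g4, g5, g6⟩ := hN n hi1 l hl
    have hXl : (0 : ℝ) < (X l).card := by exact_mod_cast hX l
    rw [le_div_iff₀ hXl, g5] at g4
    push_cast at g4
    have hs : (c : ℝ) * ε ≤ ∑ z ∈ X l, φ z := by
      calc (c : ℝ) * ε = ∑ z ∈ Γ.filter (fun z => ρ z = x i), ε := by
            rw [Finset.sum_const, g6 _ (hx i), nsmul_eq_mul]
        _ ≤ ∑ z ∈ Γ.filter (fun z => ρ z = x i), φ z := by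
            refine Finset.sum_le_sum fun z hz => ?_
            simp only [Finset.mem_filter] at hz
            have a := g3 z hz.1 0 (hX n)
            simp only [Function.iterate_zero, id, hz.2] at a
            have b := dist_triangle z (x i) y
            refine le_trans ?_ (le_max_right _ _)
            linarith
        _ ≤ _ := Finset.sum_le_sum_of_subset_of_nonneg
            ((Finset.filter_subset _ _).trans g1) (fun z _ _ => hφ0 z)
    unfold av
    rw [div_le_iff₀ hXn, mul_assoc, ← div_eq_inv_mul, le_div_iff₀ hXl]
    have : (1 / 2 : ℝ) * (X l).card ≤ (X n).card * c := by nlinarith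
    nlinarith
  have hint : ε * (1 / 2) / (X n).card ≤ ∫ z, φ z ∂μ :=
    ge_of_tendsto (hμ φ) (eventually_atTop.2 ⟨n, hlow⟩)
  have hpos : 0 < ε * (1 / 2) / (X n).card := by positivity
  by_contra hU0
  have hU0 : μ U = 0 := by simpa using hU0
  have : ∫ z, φ z ∂μ = 0 := by
    apply integral_eq_zero_of_ae
    refine ae_iff.2 (measure_mono_null ?_ hU0)
    intro z hz
    by_contra hzU
    apply hz
    have : ¬ dist z y < r := fun h => hzU (hrU h)
    exact max_eq_left (by linarith)
  linarith

/-- Lemma 2.5: if each `X_{n+1}` is a `(γ_n, κ_n)`-good approximation of `X_n`,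
`∑ γ_n < ∞` and `∏ κ_n > 0`, then the uniform measures `μ_n` on `X_n` converge in the
weak-* topology to an ergodic invariant measure `μ` whose support is the topological
limit of the sequence of orbits `X_n`. -/
theorem stmt2 {Q : Type*} [MetricSpace Q] [CompactSpace Q]
    [MeasurableSpace Q] [BorelSpace Q]
    (G : Q → Q) (hG : Continuous G)
    (X : ℕ → Finset Q) (hXper : ∀ n, IsPeriodicOrbit G (X n))
    (hXmono : StrictMono fun n => (X n).card)
    (γ : ℕ → ℝ) (hγ : ∀ n, 0 < γ n)
    (κ : ℕ → ℝ) (hκ : ∀ n, κ n ∈ Set.Ioc (0 : ℝ) 1)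
    (h1 : ∀ n, GoodApprox G (γ n) (κ n) (X (n + 1)) (X n))
    (h2 : Summable γ)
    (h3 : ∃ P : ℝ, 0 < P ∧
      Tendsto (fun n => ∏ k ∈ Finset.range n, κ k) atTop (𝓝 P)) :
    ∃ μ : Measure Q, IsProbabilityMeasure μ ∧
      (∀ φ : C(Q, ℝ),
        Tendsto (fun n => ∫ y, φ y ∂(unifOrbit (X n))) atTop (𝓝 (∫ y, φ y ∂μ))) ∧
      Ergodic G μ ∧
      msupport μ = ⋂ k : ℕ, closure (⋃ l : ℕ, ⋃ (_ : k ≤ l), (X l : Set Q)) ∧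
      msupport μ = {y : Q | ∃ (m : ℕ → ℕ) (x : ℕ → Q), Tendsto m atTop atTop ∧
        (∀ i, x i ∈ X (m i)) ∧ Tendsto x atTop (𝓝 y)} := by
  have hpos := fun n => (hXper n).1
  have hga := ga_chain G X hpos hXmono γ hγ κ hκ h1 h2 h3
  obtain ⟨μ, hp, hμ⟩ := exists_lim hXper hga
  have a := supp_sub hpos μ hμ
  have b := sub_lim X
  have c := lim_sub hpos hga μ hμ
  refine ⟨μ, hp, ?_, lim_erg hG hXper hga μ hμ, a.antisymm (b.trans c),
    (a.trans b).antisymm c⟩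
  intro φ
  simp only [integral_unif]
  exact hμ φ
end
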